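/- arXiv:2007.00662 — 5 statements merged into one kernel-verified Lean document; each statement's English description precedes it below -/
import Mathlib

section
/- Let n ≥ 1, let ω = exp(2πi/2^n), let U be the 2^n × 2^n quantum Fourier transform matrix with entries U_{y,z} = ω^{yz}/√(2^n) for y, z ∈ {0, …, 2^n − 1}, and let Z₁ be the diagonal matrix with (Z₁)_{y,y} = (−1)^{⌊y/2^{n−1}⌋}. Then for all indices x ≠ z, the (z,x) entry of U† Z₁ U equals (1/2^{n−1}) · (1 − (−1)^{x−z}) / (1 − ω^{x−z}), and every diagonal entry of U† Z₁ U is 0. -/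
/-!
Expanding the product, the `(z, x)` entry of `U† Z₁ U` is
`2⁻ⁿ ∑_y (-1)^(y₁) r^y` with `r = ω^(x - z)`. The two halves `y₁ = 0` and `y₁ = 1` of the
sum differ by the factor `-r^(2^(n-1))`, and `ω^(2^(n-1)) = -1`, so the entry is
`2⁻ⁿ (1 - (-1)^(x - z)) ∑_{y < 2^(n-1)} r^y` (`qft_entry`). On the diagonal the middle factor
vanishes. Off the diagonal `r ≠ 1` because `ω` is a primitive root of unity, so the geometric
sum equals `(1 - (-1)^(x - z)) / (1 - r)`, and `(1 - ε)² = 2 (1 - ε)` for a sign `ε`.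
-/

open Complex Matrix

/-- The quantum Fourier transform matrix on `n` qubits: entries `ω^(y z)/√(2^n)`
with `ω = exp(2πi/2^n)`. -/
noncomputable def QFT (n : ℕ) : Matrix (Fin (2 ^ n)) (Fin (2 ^ n)) ℂ :=
  fun y z => Complex.exp (2 * Real.pi * Complex.I / 2 ^ n) ^ (y.val * z.val) /
    Real.sqrt (2 ^ n)

/-- The Pauli-Z operator on the first (most significant) qubit: the diagonal matrix
with entries `(−1)^(y₁)`, where `y₁ = ⌊y/2^(n−1)⌋` is the most significant bit. -/
noncomputable def PauliZ1 (n : ℕ) : Matrix (Fin (2 ^ n)) (Fin (2 ^ n)) ℂ :=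
  Matrix.diagonal (fun y => (-1 : ℂ) ^ (y.val / 2 ^ (n - 1)))

/-- The basic root of unity `exp(2πi/2^n)`. -/
noncomputable def qftRoot (n : ℕ) : ℂ := Complex.exp (2 * Real.pi * Complex.I / 2 ^ n)

lemma qftRoot_primitive (n : ℕ) : IsPrimitiveRoot (qftRoot n) (2 ^ n) := by
  have h := Complex.isPrimitiveRoot_exp (2 ^ n) (by positivity)
  simpa [qftRoot] using h

lemma qftRoot_ne_zero (n : ℕ) : qftRoot n ≠ 0 := Complex.exp_ne_zero _

lemma star_qftRoot (n : ℕ) : star (qftRoot n) = (qftRoot n)⁻¹ := by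
  rw [qftRoot, ← Complex.exp_neg, Complex.star_def, ← Complex.exp_conj]
  congr 1
  simp [neg_div, Complex.conj_ofNat]

lemma qftRoot_half (k : ℕ) : qftRoot (k + 1) ^ (2 ^ k) = -1 := by
  rw [qftRoot, ← Complex.exp_nat_mul, ← Complex.exp_pi_mul_I]
  congr 1
  push_cast
  rw [pow_succ]
  field_simp

lemma qftRoot_zpow_half (k : ℕ) (d : ℤ) :
    (qftRoot (k + 1) ^ d) ^ (2 ^ k) = (-1 : ℂ) ^ d := by
  rw [← zpow_natCast, zpow_comm, zpow_natCast, qftRoot_half]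

/-- The signed sum splits by the most significant bit of the summation index. -/
lemma sum_msb_sign (k : ℕ) (r : ℂ) :
    ∑ y : Fin (2 ^ (k + 1)), (-1 : ℂ) ^ (y.val / 2 ^ k) * r ^ y.val =
      (1 - r ^ (2 ^ k)) * ∑ y ∈ Finset.range (2 ^ k), r ^ y := by
  rw [Fin.sum_univ_eq_sum_range (fun y => (-1 : ℂ) ^ (y / 2 ^ k) * r ^ y) (2 ^ (k + 1)),
    pow_succ, mul_two, Finset.sum_range_add, sub_mul, one_mul, Finset.mul_sum, sub_eq_add_neg,
    ← Finset.sum_neg_distrib]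
  congr 1 <;> refine Finset.sum_congr rfl fun y hy => ?_
  · rw [Nat.div_eq_of_lt (Finset.mem_range.mp hy)]
    simp
  · rw [Nat.add_div_left _ (by positivity), Nat.div_eq_of_lt (Finset.mem_range.mp hy), pow_add r]
    simp

/-- Every entry of `U† Z₁ U`, diagonal or not, as a sign factor times a geometric sum. -/
lemma qft_entry (k : ℕ) (x z : Fin (2 ^ (k + 1))) :
    ((QFT (k + 1))ᴴ * PauliZ1 (k + 1) * QFT (k + 1)) z x =
      1 / 2 ^ (k + 1) * ((1 - (-1 : ℂ) ^ ((x : ℤ) - (z : ℤ))) *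
        ∑ y ∈ Finset.range (2 ^ k), (qftRoot (k + 1) ^ ((x : ℤ) - (z : ℤ))) ^ y) := by
  rw [← qftRoot_zpow_half k, ← sum_msb_sign, Finset.mul_sum, Matrix.mul_apply]
  refine Finset.sum_congr rfl fun y _ => ?_
  have hs : ((Real.sqrt (2 ^ (k + 1)) : ℝ) : ℂ) * (Real.sqrt (2 ^ (k + 1)) : ℝ) =
      2 ^ (k + 1) := by
    rw [← Complex.ofReal_mul, Real.mul_self_sqrt (by positivity)]
    push_cast
    rfl
  have hr : (qftRoot (k + 1) ^ ((x : ℤ) - (z : ℤ))) ^ y.val =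
      (qftRoot (k + 1))⁻¹ ^ (y.val * z.val) * qftRoot (k + 1) ^ (y.val * x.val) := by
    rw [zpow_sub₀ (qftRoot_ne_zero _), zpow_natCast, zpow_natCast, div_pow, ← pow_mul,
      ← pow_mul, inv_pow, mul_comm x.val, mul_comm z.val, div_eq_mul_inv, mul_comm]
  have hq : ∀ w : Fin (2 ^ (k + 1)), QFT (k + 1) y w =
      qftRoot (k + 1) ^ (y.val * w.val) / (Real.sqrt (2 ^ (k + 1)) : ℝ) := fun _ => rfl
  rw [PauliZ1, Matrix.mul_diagonal, Matrix.conjTranspose_apply, hq, hq, star_div₀, star_pow,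
    star_qftRoot, hr, ← hs, Complex.star_def, Complex.conj_ofReal, Nat.add_sub_cancel]
  simp only [div_eq_mul_inv, mul_inv]
  ring

theorem qft_spread_entries (n : ℕ) (hn : 1 ≤ n) :
    (∀ x z : Fin (2 ^ n), x ≠ z →
      ((QFT n)ᴴ * PauliZ1 n * QFT n) z x =
        (1 / 2 ^ (n - 1)) *
          (1 - (-1 : ℂ) ^ ((x : ℤ) - (z : ℤ))) /
          (1 - Complex.exp (2 * Real.pi * Complex.I / 2 ^ n) ^ ((x : ℤ) - (z : ℤ)))) ∧
    (∀ x : Fin (2 ^ n), ((QFT n)ᴴ * PauliZ1 n * QFT n) x x = 0) := by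
  obtain ⟨k, rfl⟩ : ∃ k, n = k + 1 := ⟨n - 1, by omega⟩
  refine ⟨fun x z hxz => ?_, fun x => by rw [qft_entry]; simp⟩
  rw [qft_entry, Nat.add_sub_cancel]
  change _ = 1 / 2 ^ k * (1 - (-1 : ℂ) ^ ((x : ℤ) - (z : ℤ))) /
    (1 - qftRoot (k + 1) ^ ((x : ℤ) - (z : ℤ)))
  have hr : qftRoot (k + 1) ^ ((x : ℤ) - (z : ℤ)) ≠ 1 := by
    intro h
    -- `2^(k+1)` would divide `x - z`, whose absolute value is smaller than `2^(k+1)`.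
    have hd := ((qftRoot_primitive (k + 1)).zpow_eq_one_iff_dvd _).mp h
    have h0 := Int.eq_zero_of_abs_lt_dvd hd (by rw [abs_lt]; omega)
    exact hxz (Fin.ext (by omega))
  rw [geom_sum_eq hr, qftRoot_zpow_half]
  have h1 : 1 - qftRoot (k + 1) ^ ((x : ℤ) - (z : ℤ)) ≠ 0 := sub_ne_zero.mpr hr.symm
  rw [← neg_div_neg_eq (_ - (1 : ℂ)), neg_sub, neg_sub]
  have h_sign : (-1 : ℂ) ^ ((x : ℤ) - (z : ℤ)) = 1 ∨ (-1 : ℂ) ^ ((x : ℤ) - (z : ℤ)) = -1 :=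
    (Int.even_or_odd _).imp Even.neg_one_zpow Odd.neg_one_zpow
  rcases h_sign with h | h <;> rw [h]
  · simp
  · rw [pow_succ]
    field_simp
    norm_num
end

section
/- Let n ≥ 1, let ω = exp(2πi/2^n), let U be the 2^n × 2^n matrix with entries U_{y,z} = ω^{yz}/√(2^n), and let Z₁ be the diagonal matrix with (Z₁)_{y,y} = (−1)^{⌊y/2^{n−1}⌋}. Then for all x, z ∈ {0, …, 2^n − 1} with x ≡ z (mod 2), the (z,x) entry of U† Z₁ U is 0. -/
/-!
The entry at `(z, x)` is `∑ y, conj (ω^(y z)) (-1)^(y₁) ω^(y x) / 2^n`. Flipping the most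
significant bit of `y`, i.e. replacing `y < 2^(n-1)` by `2^(n-1) + y`, changes the sign of
`(-1)^(y₁)` and multiplies the two powers of `ω` by `(-1)^z (-1)^x = 1`, because
`ω^(2^(n-1)) = -1` and `x ≡ z (mod 2)`. So the two halves of the sum cancel; in particular this
covers the diagonal entries `x = z`.
-/

open Complex Matrix

/-- `ω ^ (2 ^ (n - 1)) = -1`, written with `n = m + 1`. -/
theorem qft_root_pow_half (m : ℕ) :
    Complex.exp (2 * Real.pi * Complex.I / 2 ^ (m + 1)) ^ (2 ^ m) = -1 := by
  rw [← Complex.exp_nat_mul, ← Complex.exp_pi_mul_I]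
  congr 1
  push_cast
  field_simp
  ring

theorem qft_spread_entry_zero_of_same_parity (n : ℕ) (hn : 1 ≤ n)
    (x z : Fin (2 ^ n)) (hxz : x.val % 2 = z.val % 2) :
    ((QFT n)ᴴ * PauliZ1 n * QFT n) z x = 0 := by
  obtain ⟨m, rfl⟩ : ∃ m, n = m + 1 := ⟨n - 1, by omega⟩
  rw [Matrix.mul_apply]
  simp only [PauliZ1, Matrix.mul_diagonal, Matrix.conjTranspose_apply, QFT, Nat.add_sub_cancel]
  have hw := qft_root_pow_half m
  generalize Complex.exp (2 * Real.pi * Complex.I / 2 ^ (m + 1)) = w at hw ⊢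
  generalize ((Real.sqrt (2 ^ (m + 1)) : ℝ) : ℂ) = s
  rw [Fin.sum_univ_eq_sum_range (fun y : ℕ => star (w ^ (y * z.val) / s) *
    (-1 : ℂ) ^ (y / 2 ^ m) * (w ^ (y * x.val) / s))]
  generalize x.val = a at hxz ⊢
  generalize z.val = b at hxz ⊢
  rw [pow_succ 2 m, mul_two, Finset.sum_range_add, ← Finset.sum_add_distrib]
  refine Finset.sum_eq_zero fun y _ => ?_
  have hdiv : (2 ^ m + y) / 2 ^ m = y / 2 ^ m + 1 := by
    rw [Nat.add_div_left _ (by positivity)]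
  have hp (k : ℕ) : w ^ ((2 ^ m + y) * k) = (-1) ^ k * w ^ (y * k) := by
    rw [add_mul, pow_add, pow_mul, hw]
  have hsign : (-1 : ℂ) ^ b * (-1) ^ a = 1 := by
    rw [← pow_add]
    exact Even.neg_one_pow (Nat.even_iff.mpr (by omega))
  rw [hdiv, hp, hp, pow_succ]
  simp only [star_div₀, star_mul', star_pow, star_neg, star_one]
  linear_combination (-(star w ^ (y * b) / star s * (-1 : ℂ) ^ (y / 2 ^ m) *
    (w ^ (y * a) / s))) * hsign
end

section
/- Let n ≥ 1, let ω = exp(2πi/2^n), let U be the 2^n × 2^n matrix with entries U_{y,z} = ω^{yz}/√(2^n), let Z₁ be the diagonal matrix with (Z₁)_{y,y} = (−1)^{⌊y/2^{n−1}⌋}, and let Z_n be the diagonal matrix with (Z_n)_{y,y} = (−1)^{y mod 2}. Setting O = U† Z₁ U, the projection of O onto the space of matrices that anticommute with Z_n, namely Q(O) = (O − Z_n O Z_n)/2, equals O itself, and its normalized Frobenius norm satisfies √(Tr(Q(O)† Q(O))/2^n) = 1. -/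
/-!
Multiplying the columns of the Fourier matrix `U` by the signs `(-1) ^ z` is the same as shifting its
rows by half the period: with `N = 2 ^ n` one has `ω ^ (N / 2) = -1`, so
`ω ^ (y z) (-1) ^ z = ω ^ ((y + N / 2) z)`. Adding `N / 2` modulo `N` flips the most significant bit
of `y`, hence negates `Z₁`. Therefore `Zₙ (U† Z₁ U) Zₙ = (U Zₙ)† Z₁ (U Zₙ) = - U† Z₁ U`, i.e.
`O = U† Z₁ U` anticommutes with `Zₙ` and equals its own projection (`PauliZn_conj`). Its norm is `1`
because `U` is unitary (`QFT_unitary`) and `Z₁` is a Hermitian involution, so `O† O = 1`.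
-/

open Complex Matrix

/-- The Pauli-Z operator on the `n`-th (least significant) qubit: the diagonal
matrix with entries `(−1)^(yₙ)`, where `yₙ = y mod 2` is the least significant bit. -/
noncomputable def PauliZn (n : ℕ) : Matrix (Fin (2 ^ n)) (Fin (2 ^ n)) ℂ :=
  Matrix.diagonal (fun y => (-1 : ℂ) ^ (y.val % 2))

lemma QFT_root_primitive (n : ℕ) :
    IsPrimitiveRoot (Complex.exp (2 * Real.pi * Complex.I / 2 ^ n)) (2 ^ n) := by
  have h := Complex.isPrimitiveRoot_exp (2 ^ n) (by positivity)
  push_cast at h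
  exact h

lemma QFT_unitary (n : ℕ) : (QFT n)ᴴ * QFT n = 1 := by
  have hp := QFT_root_primitive n
  ext a b
  simp only [Matrix.mul_apply, Matrix.conjTranspose_apply, QFT, Matrix.one_apply]
  generalize Complex.exp (2 * Real.pi * Complex.I / 2 ^ n) = w at hp
  have hw0 : w ≠ 0 := hp.ne_zero (by positivity)
  have hstar : star w = w⁻¹ :=
    (Complex.inv_eq_conj (hp.norm'_eq_one (by positivity))).symm
  have hsq : ((Real.sqrt (2 ^ n) : ℝ) : ℂ) * (Real.sqrt (2 ^ n) : ℝ) = 2 ^ n := by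
    rw [← Complex.ofReal_mul, Real.mul_self_sqrt (by positivity)]
    push_cast
    rfl
  have hterm : ∀ y : Fin (2 ^ n),
      star (w ^ (y.val * a.val) / ((Real.sqrt (2 ^ n) : ℝ) : ℂ)) *
        (w ^ (y.val * b.val) / ((Real.sqrt (2 ^ n) : ℝ) : ℂ)) =
      (w ^ b.val * w⁻¹ ^ a.val) ^ y.val / 2 ^ n := by
    intro y
    rw [star_div₀, star_pow, hstar, show star ((Real.sqrt (2 ^ n) : ℝ) : ℂ) = _ from
      Complex.conj_ofReal _, div_mul_div_comm, hsq, mul_pow, ← pow_mul, ← pow_mul,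
      mul_comm y.val, mul_comm y.val, mul_comm (w ^ _)]
  rw [Finset.sum_congr rfl (fun y _ => hterm y), ← Finset.sum_div,
    Fin.sum_univ_eq_sum_range (fun i => (w ^ b.val * w⁻¹ ^ a.val) ^ i)]
  split_ifs with hab
  · subst hab
    rw [← mul_pow, mul_inv_cancel₀ hw0]
    simp
  · have hr : w ^ b.val * w⁻¹ ^ a.val ≠ 1 := by
      intro h
      rw [inv_pow, mul_inv_eq_one₀ (pow_ne_zero _ hw0)] at h
      exact hab (Fin.ext (hp.pow_inj b.isLt a.isLt h).symm)
    have hrN : (w ^ b.val * w⁻¹ ^ a.val) ^ (2 ^ n) = 1 := by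
      rw [mul_pow, pow_right_comm, pow_right_comm w⁻¹, inv_pow, hp.pow_eq_one]
      simp
    rw [geom_sum_eq hr, hrN]
    simp

/-- Flipping the most significant of `m + 1` bits, that is, adding `2 ^ m` modulo `2 ^ (m + 1)`. -/
def flipTop (m : ℕ) (y : Fin (2 ^ (m + 1))) : Fin (2 ^ (m + 1)) :=
  if h : y.val < 2 ^ m then ⟨y.val + 2 ^ m, by have := pow_succ 2 m; omega⟩
  else ⟨y.val - 2 ^ m, by omega⟩

lemma flipTop_involutive (m : ℕ) : Function.Involutive (flipTop m) := by
  intro y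
  have hlt := y.isLt
  have hpow := pow_succ 2 m
  ext
  by_cases h : y.val < 2 ^ m
  · simp [flipTop, h]
  · have h2 : y.val - 2 ^ m < 2 ^ m := by omega
    simp only [flipTop, h, h2, dite_true, dite_false]
    omega

lemma PauliZ1_flipTop (m : ℕ) (y : Fin (2 ^ (m + 1))) :
    (-1 : ℂ) ^ ((flipTop m y).val / 2 ^ m) = -(-1) ^ (y.val / 2 ^ m) := by
  have hpos : 0 < 2 ^ m := by positivity
  by_cases h : y.val < 2 ^ m
  · simp [flipTop, h, Nat.add_div_right _ hpos, pow_succ]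
  · have hy : y.val = (y.val - 2 ^ m) + 2 ^ m := by omega
    have hd : y.val / 2 ^ m = (y.val - 2 ^ m) / 2 ^ m + 1 := by
      conv_lhs => rw [hy]
      exact Nat.add_div_right _ hpos
    simp only [flipTop, h, dite_false]
    rw [hd, pow_succ (-1 : ℂ)]
    ring

/-- The phase `(-1) ^ z` on the columns of the Fourier matrix is a half-period shift of its rows. -/
lemma QFT_mul_PauliZn (m : ℕ) :
    QFT (m + 1) * PauliZn (m + 1) = (QFT (m + 1)).submatrix (flipTop m) id := by
  have hp := QFT_root_primitive (m + 1)
  ext y z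
  simp only [PauliZn, Matrix.mul_diagonal, Matrix.submatrix_apply, id, QFT]
  generalize Complex.exp (2 * Real.pi * Complex.I / 2 ^ (m + 1)) = w at hp
  have hhalf : w ^ 2 ^ m = -1 :=
    (hp.pow (by positivity) (pow_succ 2 m)).eq_neg_one_of_two_right
  rw [div_mul_eq_mul_div, ← neg_one_pow_eq_pow_mod_two]
  congr 1
  by_cases h : y.val < 2 ^ m
  · simp only [flipTop, h, dite_true]
    rw [add_mul, pow_add w, pow_mul w (2 ^ m), hhalf]
  · have hy : y.val = (y.val - 2 ^ m) + 2 ^ m := by omega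
    simp only [flipTop, h, dite_false]
    conv_lhs => rw [hy]
    rw [add_mul, pow_add w, pow_mul w (2 ^ m), hhalf, mul_assoc, ← mul_pow]
    simp

lemma PauliZ1_mul_self (n : ℕ) : PauliZ1 n * PauliZ1 n = 1 := by
  simp [PauliZ1, Matrix.diagonal_mul_diagonal, ← mul_pow]

lemma PauliZ1_conjTranspose (n : ℕ) : (PauliZ1 n)ᴴ = PauliZ1 n := by
  simp only [PauliZ1, Matrix.diagonal_conjTranspose]
  congr 1
  ext y
  simp

lemma PauliZn_conjTranspose (n : ℕ) : (PauliZn n)ᴴ = PauliZn n := by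
  simp only [PauliZn, Matrix.diagonal_conjTranspose]
  congr 1
  ext y
  simp

lemma PauliZn_conj (m : ℕ) :
    PauliZn (m + 1) * ((QFT (m + 1))ᴴ * PauliZ1 (m + 1) * QFT (m + 1)) * PauliZn (m + 1) =
      -((QFT (m + 1))ᴴ * PauliZ1 (m + 1) * QFT (m + 1)) := by
  have h1 : PauliZn (m + 1) * ((QFT (m + 1))ᴴ * PauliZ1 (m + 1) * QFT (m + 1)) * PauliZn (m + 1) =
      (QFT (m + 1) * PauliZn (m + 1))ᴴ * PauliZ1 (m + 1) * (QFT (m + 1) * PauliZn (m + 1)) := by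
    rw [Matrix.conjTranspose_mul, PauliZn_conjTranspose]
    simp only [Matrix.mul_assoc]
  rw [h1, QFT_mul_PauliZn]
  ext a b
  rw [Matrix.neg_apply, Matrix.mul_apply, Matrix.mul_apply, ← Finset.sum_neg_distrib]
  refine Fintype.sum_equiv (flipTop_involutive m).toPerm _ _ fun y => ?_
  simp only [PauliZ1, Matrix.mul_diagonal, Matrix.conjTranspose_apply, Matrix.submatrix_apply, id,
    Function.Involutive.coe_toPerm, Nat.add_sub_cancel, PauliZ1_flipTop]
  ring

theorem qft_spread_full_weight_on_last_qubit (n : ℕ) (hn : 1 ≤ n) :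
    let O := (QFT n)ᴴ * PauliZ1 n * QFT n
    let Q := ((1 : ℂ) / 2) • (O - PauliZn n * O * PauliZn n)
    Q = O ∧ Real.sqrt ((Matrix.trace (Qᴴ * Q)).re / 2 ^ n) = 1 := by
  obtain ⟨m, rfl⟩ : ∃ m, n = m + 1 := ⟨n - 1, by omega⟩
  intro O Q
  have hQ : Q = O := by
    simp only [Q, O]
    rw [PauliZn_conj, sub_neg_eq_add, ← two_smul ℂ, smul_smul]
    norm_num
  refine ⟨hQ, ?_⟩
  have hO : Oᴴ * O = 1 := by
    have hU := QFT_unitary (m + 1)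
    have hU' := mul_eq_one_comm.mp hU
    calc Oᴴ * O = (QFT (m + 1))ᴴ * (PauliZ1 (m + 1) * (QFT (m + 1) * (QFT (m + 1))ᴴ) *
          PauliZ1 (m + 1)) * QFT (m + 1) := by
            simp only [O, Matrix.conjTranspose_mul, Matrix.conjTranspose_conjTranspose,
              PauliZ1_conjTranspose, Matrix.mul_assoc]
      _ = 1 := by rw [hU', Matrix.mul_one, PauliZ1_mul_self, Matrix.mul_one, hU]
  have htr : (Matrix.trace (1 : Matrix (Fin (2 ^ (m + 1))) (Fin (2 ^ (m + 1))) ℂ)).re =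
      2 ^ (m + 1) := by
    rw [Matrix.trace_one, Fintype.card_fin, Complex.natCast_re]
    push_cast
    rfl
  rw [hQ, hO, htr, div_self (by positivity), Real.sqrt_one]
end

section
/- Let n ≥ 1, let ω = exp(2πi/2^n), let U be the 2^n × 2^n matrix with entries U_{y,z} = ω^{yz}/√(2^n), and let H_n be the 2^n × 2^n matrix with entries (H_n)_{y,z} = (−1)^{y·z}/√(2^n), where y·z = Σ_{j=1}^{n} y_j z_j is the bitwise inner product of the binary representations of y and z. Then for all ψ₀, ψ₁ ∈ ℂ, the vector H_n U (ψ₀ e₀ + ψ₁ e_{2^{n−1}}) equals ψ₀ e₀ + ψ₁ e₁, where e_k denotes the k-th standard basis vector of ℂ^{2^n}. (Thus V = H^{⊗n} U_QFT implements quantum state transfer from the first qubit to the n-th qubit.) -/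
/-!
The Hadamard matrix `HadamardPow n` is a symmetric involution: the sum of a sign character
`x ↦ (-1) ^ (∑ j, x_j s_j)` over all `n`-bit strings factors as `∏ j, (1 + (-1) ^ s_j)`
(`sum_sign_eq_prod`), and for `s_j = y_j + z_j` this vanishes as soon as `y` and `z` differ in some
bit (`hadamardPow_mul_self`).

On the other hand, the columns `0` and `2 ^ (n - 1)` of the Fourier matrix are the columns `0` and
`1` of the Hadamard matrix: the first is constant, and `ω ^ (y * 2 ^ (n - 1)) = (-1) ^ y` only
depends on the last bit of `y`. Applying the Hadamard matrix therefore sends these columns to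
`e₀` and `e₁`, and the result follows by linearity.
-/

open Complex Matrix

/-- The `n`-fold tensor power of the Hadamard gate: entries `(−1)^(y·z)/√(2^n)`,
where `y·z = Σ_j y_j z_j` is the bitwise inner product of the binary
representations of `y` and `z`. -/
noncomputable def HadamardPow (n : ℕ) : Matrix (Fin (2 ^ n)) (Fin (2 ^ n)) ℂ :=
  fun y z =>
    (-1 : ℂ) ^ (∑ j ∈ Finset.range n, (y.val / 2 ^ j % 2) * (z.val / 2 ^ j % 2)) /
      Real.sqrt (2 ^ n)

/-- The `k`-th standard basis vector of `ℂ^(2^n)`. -/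
noncomputable def stdBasis (n : ℕ) (k : Fin (2 ^ n)) : Fin (2 ^ n) → ℂ :=
  Pi.single k 1

lemma sum_range_two_mul {M : Type*} [AddCommMonoid M] (f : ℕ → M) (m : ℕ) :
    ∑ x ∈ Finset.range (2 * m), f x = ∑ x ∈ Finset.range m, (f (2 * x) + f (2 * x + 1)) := by
  induction m with
  | zero => simp
  | succ m ih =>
    rw [Finset.sum_range_succ _ m, ← ih, Nat.mul_succ, Finset.sum_range_succ,
      Finset.sum_range_succ, add_assoc]

/-- The sum of a sign character over all `n`-bit strings factors over the bits; the induction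
splits off the least significant bit. -/
lemma sum_sign_eq_prod (n : ℕ) (s : ℕ → ℕ) :
    ∑ x ∈ Finset.range (2 ^ n), (-1 : ℂ) ^ (∑ j ∈ Finset.range n, (x / 2 ^ j % 2) * s j) =
      ∏ j ∈ Finset.range n, (1 + (-1 : ℂ) ^ s j) := by
  induction n generalizing s with
  | zero => simp
  | succ n ih =>
    have h0 (x j : ℕ) : 2 * x / 2 ^ (j + 1) = x / 2 ^ j := by
      rw [pow_succ', ← Nat.div_div_eq_div_mul]; congr 1; omega
    have h1 (x j : ℕ) : (2 * x + 1) / 2 ^ (j + 1) = x / 2 ^ j := by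
      rw [pow_succ', ← Nat.div_div_eq_div_mul]; congr 1; omega
    rw [pow_succ', sum_range_two_mul, Finset.prod_range_succ', ← ih (fun j => s (j + 1)),
      Finset.sum_mul]
    refine Finset.sum_congr rfl fun x _ => ?_
    have h2 : (2 * x + 1) % 2 = 1 := by omega
    simp only [Finset.sum_range_succ', h0, h1, pow_zero, Nat.div_one, Nat.mul_mod_right, h2,
      zero_mul, one_mul, add_zero]
    rw [pow_add]
    ring

lemma exists_bit_ne {n y z : ℕ} (hy : y < 2 ^ n) (hz : z < 2 ^ n) (h : y ≠ z) :
    ∃ j < n, y / 2 ^ j % 2 ≠ z / 2 ^ j % 2 := by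
  by_contra! hc
  refine h (Nat.eq_of_testBit_eq fun j => ?_)
  by_cases hj : j < n
  · simp only [Nat.testBit_eq_decide_div_mod_eq, hc j hj]
  · have hp : 2 ^ n ≤ 2 ^ j := Nat.pow_le_pow_right two_pos (not_lt.mp hj)
    rw [Nat.testBit_lt_two_pow (hy.trans_le hp), Nat.testBit_lt_two_pow (hz.trans_le hp)]

lemma sqrt_mul_sqrt_two_pow (n : ℕ) :
    ((Real.sqrt (2 ^ n) : ℝ) : ℂ) * (Real.sqrt (2 ^ n) : ℝ) = 2 ^ n := by
  rw [← Complex.ofReal_mul, Real.mul_self_sqrt (by positivity)]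
  push_cast
  rfl

/-- `HadamardPow n` is an involution. -/
lemma hadamardPow_mul_self (n : ℕ) : HadamardPow n * HadamardPow n = 1 := by
  ext y z
  have key : (HadamardPow n * HadamardPow n) y z =
      (∏ j ∈ Finset.range n, (1 + (-1 : ℂ) ^ (y.val / 2 ^ j % 2 + z.val / 2 ^ j % 2))) / 2 ^ n := by
    rw [← sum_sign_eq_prod, Finset.sum_range, Finset.sum_div, Matrix.mul_apply]
    refine Finset.sum_congr rfl fun x _ => ?_
    simp only [HadamardPow]
    rw [div_mul_div_comm, sqrt_mul_sqrt_two_pow, ← pow_add, ← Finset.sum_add_distrib]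
    congr 2
    exact Finset.sum_congr rfl fun j _ => by ring
  rw [key]
  by_cases h : y = z
  · subst h
    have h2 (a : ℕ) : (1 : ℂ) + (-1) ^ (a + a) = 2 := by
      rw [Even.neg_one_pow ⟨a, rfl⟩]; norm_num
    simp only [h2, Finset.prod_const, Finset.card_range, Matrix.one_apply_eq]
    exact div_self (pow_ne_zero n two_ne_zero)
  · obtain ⟨j, hj, hne⟩ := exists_bit_ne y.2 z.2 (Fin.val_injective.ne h)
    rw [Matrix.one_apply_ne h, Finset.prod_eq_zero (Finset.mem_range.mpr hj), zero_div]
    have : y.val / 2 ^ j % 2 + z.val / 2 ^ j % 2 = 1 := by omega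
    rw [this]; norm_num

/-- Column `0` of the Fourier matrix is column `0` of the Hadamard matrix. -/
lemma qft_col_zero (n : ℕ) (h : 0 < 2 ^ n) :
    (QFT n).col ⟨0, h⟩ = (HadamardPow n).col ⟨0, h⟩ := by
  ext y
  simp [QFT, HadamardPow]

/-- Column `2 ^ (n - 1)` of the Fourier matrix is column `1` of the Hadamard matrix, since both have
entries `(-1) ^ y / √(2 ^ n)`. -/
lemma qft_col_top (n : ℕ) (hn : 1 ≤ n) (h : 2 ^ (n - 1) < 2 ^ n) (h' : 1 < 2 ^ n) :
    (QFT n).col ⟨2 ^ (n - 1), h⟩ = (HadamardPow n).col ⟨1, h'⟩ := by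
  obtain ⟨m, rfl⟩ : ∃ m, n = m + 1 := ⟨n - 1, by omega⟩
  ext y
  have hω : Complex.exp (2 * Real.pi * Complex.I / 2 ^ (m + 1)) ^ (2 ^ m) = -1 := by
    rw [← Complex.exp_nat_mul, ← Complex.exp_pi_mul_I]
    congr 1
    push_cast
    field_simp
    ring
  have hs : ∑ j ∈ Finset.range (m + 1), (y.val / 2 ^ j % 2) * (1 / 2 ^ j % 2) = y.val % 2 := by
    rw [Finset.sum_range_succ', Finset.sum_eq_zero]
    · simp
    · intro j _
      rw [Nat.div_eq_of_lt (Nat.one_lt_two_pow (Nat.succ_ne_zero j))]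
      simp
  simp only [Matrix.col_apply, QFT, HadamardPow, Nat.add_sub_cancel, hs]
  rw [mul_comm y.val, pow_mul, hω, ← neg_one_pow_eq_pow_mod_two]

theorem hadamard_qft_state_transfer (n : ℕ) (hn : 1 ≤ n) (ψ₀ ψ₁ : ℂ) :
    (HadamardPow n * QFT n).mulVec
        (ψ₀ • stdBasis n ⟨0, by positivity⟩ +
          ψ₁ • stdBasis n ⟨2 ^ (n - 1),
            Nat.pow_lt_pow_right one_lt_two (by omega)⟩) =
      ψ₀ • stdBasis n ⟨0, by positivity⟩ +
        ψ₁ • stdBasis n ⟨1, Nat.one_lt_two_pow_iff.mpr (by omega)⟩ := by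
  have h1 : 1 < 2 ^ n := Nat.one_lt_two_pow_iff.mpr (by omega)
  -- A column of the Fourier matrix equal to the `k`-th Hadamard column is sent to `e_k`.
  have transfer (i k : Fin (2 ^ n)) (h : (QFT n).col i = (HadamardPow n).col k) :
      (HadamardPow n * QFT n).mulVec (_root_.stdBasis n i) = _root_.stdBasis n k := by
    unfold _root_.stdBasis
    rw [← Matrix.mulVec_mulVec, Matrix.mulVec_single_one, h, ← Matrix.mulVec_single_one,
      Matrix.mulVec_mulVec, hadamardPow_mul_self, Matrix.one_mulVec]
  rw [Matrix.mulVec_add, Matrix.mulVec_smul, Matrix.mulVec_smul,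
    transfer _ _ (qft_col_zero n _), transfer _ _ (qft_col_top n hn _ h1)]
end

section
/- Let n ≥ 2 and for each i ∈ {2, …, n} let C_i be the permutation matrix on ℂ^{2^n} implementing the CNOT gate from qubit 1 to qubit i: C_i|y₁, …, y_n⟩ = |y₁, …, y_{i−1}, y_i ⊕ y₁, y_{i+1}, …, y_n⟩. Then for all ψ₀, ψ₁ ∈ ℂ, the cascaded product C_n C_{n−1} ⋯ C₂ applied to the state (ψ₀|0⟩ + ψ₁|1⟩) ⊗ |0⟩^{⊗(n−1)} equals ψ₀|0…0⟩ + ψ₁|1…1⟩. (This is the long-range broadcast of a single-qubit state into a GHZ-like state.) -/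
/-!
A CNOT gate is a permutation matrix, so it sends the basis vector `|y⟩` to a basis vector
(`cnotFrom0_mulVec_single`). No gate in the cascade targets the control qubit, so the control bit
stays equal to `y 0` throughout, and, the targets being distinct, the cascade XORs `y 0` once into
each target (`cascade_mulVec_single`). With every other qubit as a target, `|0…0⟩` is fixed and
`|10…0⟩` goes to `|1…1⟩`; the claim follows by linearity.
-/

open Matrix

/-- The CNOT gate from qubit `0` (the first qubit) to qubit `i`, as a permutation
matrix on `ℂ^(2^n)` with basis states indexed by `n`-bit strings: it XORs bit `0`
into bit `i`. -/
def cnotFrom0 (n : ℕ) (h : 0 < n) (i : Fin n) :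
    Matrix (Fin n → Bool) (Fin n → Bool) ℂ :=
  fun s t => if s = Function.update t i (xor (t i) (t ⟨0, h⟩)) then 1 else 0

theorem cnotFrom0_mulVec_single (n : ℕ) (h : 0 < n) (i : Fin n) (y : Fin n → Bool) :
    (cnotFrom0 n h i).mulVec (Pi.single y 1 : (Fin n → Bool) → ℂ) =
      Pi.single (Function.update y i (xor (y i) (y ⟨0, h⟩))) 1 := by
  ext s
  simp [cnotFrom0, Pi.single_apply]

/-- The reversed product applies the gates in list order, the head of `L` first. -/
theorem cascade_mulVec_single (n : ℕ) (h : 0 < n) (L : List (Fin n)) (hL : L.Nodup)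
    (h_zero : (⟨0, h⟩ : Fin n) ∉ L) (y : Fin n → Bool) :
    ((L.map (cnotFrom0 n h)).reverse.prod).mulVec (Pi.single y 1 : (Fin n → Bool) → ℂ) =
      Pi.single (fun j => if j ∈ L then xor (y j) (y ⟨0, h⟩) else y j) 1 := by
  induction L generalizing y with
  | nil => exact Matrix.one_mulVec _
  | cons i L ih =>
    obtain ⟨hi, hL⟩ := List.nodup_cons.1 hL
    obtain ⟨h_ne, h_zero⟩ := not_or.1 (mt List.mem_cons.2 h_zero)
    rw [List.map_cons, List.reverse_cons, List.prod_append, List.prod_singleton,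
      ← Matrix.mulVec_mulVec, cnotFrom0_mulVec_single, ih hL h_zero]
    congr 1
    funext j
    rw [Function.update_of_ne h_ne]
    by_cases hj : j = i
    · subst hj
      simp [hi]
    · simp [hj]

theorem cascaded_cnots_broadcast (n : ℕ) (hn : 2 ≤ n) (ψ₀ ψ₁ : ℂ) :
    ((((List.finRange n).filter (fun i => i ≠ ⟨0, by omega⟩)).map
          (cnotFrom0 n (by omega))).reverse.prod).mulVec
        (ψ₀ • (Pi.single (fun _ => false) 1 : (Fin n → Bool) → ℂ) +
          ψ₁ • (Pi.single (fun i => i = (⟨0, by omega⟩ : Fin n)) 1 :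
            (Fin n → Bool) → ℂ)) =
      ψ₀ • (Pi.single (fun _ => false) 1 : (Fin n → Bool) → ℂ) +
        ψ₁ • (Pi.single (fun _ => true) 1 : (Fin n → Bool) → ℂ) := by
  rw [Matrix.mulVec_add, Matrix.mulVec_smul, Matrix.mulVec_smul,
    cascade_mulVec_single _ _ _ ((List.nodup_finRange n).filter _) (by simp),
    cascade_mulVec_single _ _ _ ((List.nodup_finRange n).filter _) (by simp)]
  congr 3
  · funext j
    simp
  · funext j
    by_cases hj : j = ⟨0, by omega⟩ <;> simp [hj]
end
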